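/- Let f : T → T be a continuous map of a tree such that no cut-point of T is periodic, and let s be the unique attracting fixed point of f. Then for every x ∈ T, either f^n(x) is a periodic point for some n ≥ 0, or the orbit f^n(x) converges to s as n → ∞. -/

import Mathlib

open Set Filter Metric Topology TopologicalSpace

/-- An arc: a subset homeomorphic to `[0,1]`. -/
def IsArc {T : Type*} [TopologicalSpace T] (A : Set T) : Prop :=
  Nonempty (↥(Set.Icc (0:ℝ) 1) ≃ₜ ↥A)

/-- An arc with endpoints `x` and `y`. -/
def IsArcBetween {T : Type*} [TopologicalSpace T] (A : Set T) (x y : T) : Prop :=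
  ∃ e : ↥(Set.Icc (0:ℝ) 1) ≃ₜ ↥A,
    ((e ⟨0, by norm_num⟩ : ↥A) : T) = x ∧ ((e ⟨1, by norm_num⟩ : ↥A) : T) = y

/-- A tree: a continuum which is uniquely arcwise connected and is a point or a
union of finitely many arcs. -/
structure IsTreeSpace (T : Type*) [MetricSpace T] : Prop where
  compact : CompactSpace T
  conn : ConnectedSpace T
  uniqueArc : ∀ x y : T, x ≠ y → ∃! A : Set T, IsArcBetween A x y
  finiteArcs : (∃ x : T, (Set.univ : Set T) = {x}) ∨
    ∃ s : Finset (Set T), (∀ A ∈ s, IsArc A) ∧ ⋃₀ (s : Set (Set T)) = Set.univ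

/-- The unique arc from `x` to `y` in a tree. -/
noncomputable def treeArc {T : Type*} [MetricSpace T] (hT : IsTreeSpace T) (x y : T) :
    Set T := by
  classical exact if h : x = y then {x} else (hT.uniqueArc x y h).choose

/-- `Comp B x` : the connected component of `x` in `B` if `x ∈ B`, else `{x}`. -/
noncomputable def Comp {T : Type*} [TopologicalSpace T] (B : Set T) (x : T) : Set T := by
  classical exact if x ∈ B then connectedComponentIn B x else {x}

/-- `x` is an endpoint of the whole space (valence one). -/
def IsEnd {T : Type*} [TopologicalSpace T] (x : T) : Prop :=
  IsConnected ({x}ᶜ : Set T)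

/-- `x` is a cut-point of the whole space (valence at least two). -/
def IsCut {T : Type*} [TopologicalSpace T] (x : T) : Prop :=
  ¬ IsPreconnected ({x}ᶜ : Set T)

/-- `x` is an endpoint of the subspace `S` (valence one in `S`). -/
def IsEndpointOf {T : Type*} [TopologicalSpace T] (S : Set T) (x : T) : Prop :=
  x ∈ S ∧ IsConnected (S \ {x})

/-- A subcontinuum: a nonempty compact connected subset. -/
def IsSubcontinuum {T : Type*} [TopologicalSpace T] (A : Set T) : Prop :=
  A.Nonempty ∧ IsCompact A ∧ IsConnected A

/-- Attracting fixed point. -/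
def IsAFP {T : Type*} [TopologicalSpace T] (f : T → T) (x : T) : Prop :=
  f x = x ∧ ∀ U : Set T, IsOpen U → x ∈ U →
    ∃ V : Set T, IsOpen V ∧ x ∈ V ∧ V ⊆ U ∧ f '' closure V ⊆ V

/-- `A` is asymptotically periodic under `f`: for some `p ≥ 1` the sequence
`f^{pn}(A)` converges in the Hausdorff metric (to a nonempty compact set). -/
def AsympPeriodic {T : Type*} [MetricSpace T] (f : T → T) (A : Set T) : Prop :=
  ∃ p : ℕ, 1 ≤ p ∧ ∃ L : Set T, L.Nonempty ∧ IsCompact L ∧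
    Tendsto (fun n : ℕ => hausdorffDist (f^[p * n] '' A) L) atTop (𝓝 0)

/-- Kuratowski lower limit of a sequence of sets. -/
def KLiminf {T : Type*} [TopologicalSpace T] (A : ℕ → Set T) : Set T :=
  {x | ∀ U : Set T, IsOpen U → x ∈ U → ∀ᶠ n in atTop, (U ∩ A n).Nonempty}

/-- Kuratowski upper limit of a sequence of sets. -/
def KLimsup {T : Type*} [TopologicalSpace T] (A : ℕ → Set T) : Set T :=
  {x | ∀ U : Set T, IsOpen U → x ∈ U → ∃ᶠ n in atTop, (U ∩ A n).Nonempty}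

/-- Convergence in the hyperspace: the Kuratowski lower and upper limits agree. -/
def KConv {T : Type*} [TopologicalSpace T] (A : ℕ → Set T) : Prop :=
  KLiminf A = KLimsup A

/-- Set-theoretic limit superior of the iterated images of `A`. -/
def Ls {T : Type*} (f : T → T) (A : Set T) : Set T :=
  ⋂ m : ℕ, ⋃ n : ℕ, ⋃ (_ : m ≤ n), f^[n] '' A

/-- The hyperspace of subcontinua of `T`, with the Hausdorff metric. -/
abbrev SubCon (T : Type*) [MetricSpace T] :=
  {A : NonemptyCompacts T // IsConnected (A.1 : Set T)}

/-- The induced map on the hyperspace of subcontinua. -/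
noncomputable def indCon {T : Type*} [MetricSpace T] (f : T → T) (hf : Continuous f) :
    SubCon T → SubCon T :=
  fun A => ⟨⟨⟨f '' (A.1 : Set T), A.1.isCompact.image hf⟩, A.1.nonempty.image f⟩,
    A.2.image f hf.continuousOn⟩

/-- Topological entropy (Bowen–Dinaburg) of `f` on the subset `S`. -/
noncomputable def entropyOn {X : Type*} [MetricSpace X] (f : X → X) (S : Set X) : EReal :=
  Dynamics.coverEntropy f S

/-- Topological entropy of `f`. -/
noncomputable def entropy {X : Type*} [MetricSpace X] (f : X → X) : EReal :=
  Dynamics.coverEntropy f Set.univ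

/-- Maximal cardinality of an `(n,f,ε)`-separated subset of `S`. -/
noncomputable def sepNumOn {X : Type*} [MetricSpace X] (f : X → X) (S : Set X)
    (n : ℕ) (ε : ℝ) : ℕ :=
  sSup {k : ℕ | ∃ E : Finset X, ↑E ⊆ S ∧
    (∀ x ∈ E, ∀ y ∈ E, x ≠ y → ∃ j < n, ε < dist (f^[j] x) (f^[j] y)) ∧ E.card = k}

/-- Minimal cardinality of an `(n,f,ε)`-spanning subset of `S`. -/
noncomputable def spanNumOn {X : Type*} [MetricSpace X] (f : X → X) (S : Set X)
    (n : ℕ) (ε : ℝ) : ℕ :=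
  sInf {k : ℕ | ∃ F : Finset X, ↑F ⊆ S ∧
    (∀ x ∈ S, ∃ y ∈ F, ∀ j < n, dist (f^[j] x) (f^[j] y) ≤ ε) ∧ F.card = k}

noncomputable def sepNum {X : Type*} [MetricSpace X] (f : X → X) (n : ℕ) (ε : ℝ) : ℕ :=
  sepNumOn f Set.univ n ε

noncomputable def spanNum {X : Type*} [MetricSpace X] (f : X → X) (n : ℕ) (ε : ℝ) : ℕ :=
  spanNumOn f Set.univ n ε

/-- The graph of a map. -/
def graphOf {X : Type*} (φ : X → X) : Set (X × X) := {p | p.2 = φ p.1}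

/-- The functional envelope: the closure, in the hyperspace of nonempty compact
subsets of `X × X` with the Hausdorff metric, of the set of graphs of continuous
self-maps of `X`. -/
def FunctionalEnvelope (X : Type*) [MetricSpace X] :
    Set (NonemptyCompacts (X × X)) :=
  closure {G : NonemptyCompacts (X × X) | ∃ φ : X → X, Continuous φ ∧
    (G : Set (X × X)) = graphOf φ}

/-- `F` is the map induced by `f` on the functional envelope:
`F(φ) = f ∘ φ`, i.e. on graphs, `F(G) = (id × f)(G)`. -/
def IsEnvelopeMap {X : Type*} [MetricSpace X] (f : X → X)
    (F : ↥(FunctionalEnvelope X) → ↥(FunctionalEnvelope X)) : Prop :=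
  ∀ G : ↥(FunctionalEnvelope X),
    ((F G : NonemptyCompacts (X × X)) : Set (X × X)) =
      Prod.map id f '' ((G : NonemptyCompacts (X × X)) : Set (X × X))

/-- The setoid on `T` identifying all points of `M` (so that `Quotient` is `T/M`). -/
def collapseSetoid {T : Type*} (M : Set T) : Setoid T where
  r a b := a = b ∨ (a ∈ M ∧ b ∈ M)
  iseqv := by
    refine ⟨fun a => Or.inl rfl, ?_, ?_⟩
    · rintro a b (rfl | ⟨h1, h2⟩)
      exacts [Or.inl rfl, Or.inr ⟨h2, h1⟩]
    · rintro a b c (rfl | ⟨h1, h2⟩) h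
      · exact h
      · rcases h with rfl | ⟨h3, h4⟩
        exacts [Or.inr ⟨h1, h2⟩, Or.inr ⟨h1, h4⟩]

/-! In a tree `T`, write `c ≤ z` if `c` lies on the arc from `s` to `z`; this is the partial order
`CutLE s c z`. If `x ≤ g x` for a continuous `g` having `s` as an attracting fixed point, then
`g x = x` unless some cut-point is fixed: some point of the arc from `s` to `x` other than `s`
is not moved upwards, so an intermediate value argument along the arc yields a fixed point `c ≤ x`,
`c ≠ s`, which is a cut-point if `c ≠ x`. Applied to the iterates of `f`, this shows that an orbit
which is never periodic never climbs above one of its earlier terms. The endpoints of the finitely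
many arcs covering `T` dominate every point, so such an orbit splits into finitely many sequences,
each decreasing along an arc from `s` and hence converging to `s` or to a cut-point. Its `ω`-limit
set is therefore finite; being invariant, it contains a periodic point, which can only be `s`. An
orbit accumulating at the attracting point `s` converges to it. -/

/-- `γ` restricted to `[u, v]` parametrizes an arc from `a` to `b`. The parameter interval varies so
that arcs can be cut and concatenated without rescaling; `u = v` gives the degenerate arc `{a}`. -/
structure IsArcPath {X : Type*} [TopologicalSpace X] (γ : ℝ → X) (u v : ℝ) (a b : X) : Prop where
  le : u ≤ v
  continuousOn : ContinuousOn γ (Icc u v)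
  injOn : InjOn γ (Icc u v)
  source : γ u = a
  target : γ v = b

/-- `a` and `b` are the ends of a possibly degenerate arc inside `U`; compare `JoinedIn`. -/
def ArcJoinedIn {X : Type*} [TopologicalSpace X] (U : Set X) (a b : X) : Prop :=
  ∃ (γ : ℝ → X) (u v : ℝ), IsArcPath γ u v a b ∧ MapsTo γ (Icc u v) U

/-- Local arcwise connectedness, in its weak form: points near `x` are joined to `x`, rather than to
each other, by arcs inside a given neighbourhood of `x`. -/
def LocallyArcConnected (X : Type*) [TopologicalSpace X] : Prop :=
  ∀ x : X, ∀ U ∈ 𝓝 x, ∀ᶠ y in 𝓝 x, ArcJoinedIn U x y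

/-- Unique arcwise connectedness: distinct points are the endpoints of exactly one arc. -/
def UniquelyArcConnected (X : Type*) [TopologicalSpace X] : Prop :=
  ∀ x y : X, x ≠ y → ∃! A : Set X, IsArcBetween A x y

/-- The cut-point order based at `s`: `c` precedes `z` if every connected set containing `s` and `z`
contains `c`. In a tree this says that `c` lies on the arc from `s` to `z`. -/
def CutLE {X : Type*} [TopologicalSpace X] (s c z : X) : Prop :=
  ∀ C : Set X, IsPreconnected C → s ∈ C → z ∈ C → c ∈ C

/-- Monotonicity of a map from a linear order to a space with the cut-point order based at `s`
(`Monotone` itself would need that order as an instance). -/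
def CutMonotone {α X : Type*} [LE α] [TopologicalSpace X] (s : X) (γ : α → X) : Prop :=
  ∀ ⦃t t' : α⦄, t ≤ t' → CutLE s (γ t) (γ t')

section Arcs

variable {X : Type*} [TopologicalSpace X] {γ δ : ℝ → X} {u v w t t' : ℝ} {a b c : X} {A U : Set X}

namespace IsArcPath

theorem restrict (h : IsArcPath γ u v a b) (ht : t ∈ Icc u v) (ht' : t' ∈ Icc u v) (htt' : t ≤ t') :
    IsArcPath γ t t' (γ t) (γ t') :=
  have hsub : Icc t t' ⊆ Icc u v := Icc_subset_Icc ht.1 ht'.2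
  ⟨htt', h.continuousOn.mono hsub, h.injOn.mono hsub, rfl, rfl⟩

theorem comp_neg (h : IsArcPath γ u v a b) : IsArcPath (fun t ↦ γ (-t)) (-v) (-u) b a := by
  have hmaps : MapsTo Neg.neg (Icc (-v) (-u)) (Icc u v) := fun t ht ↦
    ⟨le_neg.1 ht.2, neg_le.1 ht.1⟩
  exact ⟨neg_le_neg h.le, h.continuousOn.comp continuousOn_neg hmaps,
    h.injOn.comp neg_injective.injOn hmaps, by simpa using h.target, by simpa using h.source⟩

theorem comp_sub_const (h : IsArcPath γ u v a b) (r : ℝ) :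
    IsArcPath (fun t ↦ γ (t - r)) (u + r) (v + r) a b := by
  have hmaps : MapsTo (· - r) (Icc (u + r) (v + r)) (Icc u v) := fun t ht ↦
    ⟨le_sub_right_of_add_le ht.1, sub_left_le_of_le_add (add_comm v r ▸ ht.2)⟩
  exact ⟨by gcongr; exact h.le, h.continuousOn.comp (by fun_prop) hmaps,
    h.injOn.comp sub_left_injective.injOn hmaps, by simpa using h.source, by simpa using h.target⟩

theorem exists_append (hγ : IsArcPath γ u v a b) (hδ : IsArcPath δ v w b c)
    (hmeet : ∀ t ∈ Icc u v, ∀ t' ∈ Icc v w, γ t = δ t' → t = v) :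
    ∃ η : ℝ → X, IsArcPath η u w a c ∧ EqOn η γ (Icc u v) ∧ EqOn η δ (Icc v w) := by
  classical
  let η : ℝ → X := (Iic v).piecewise γ δ
  have hηγ : EqOn η γ (Icc u v) := fun t ht ↦ piecewise_eq_of_mem _ _ _ ht.2
  have hηδ : EqOn η δ (Icc v w) := by
    intro t ht
    rcases ht.1.eq_or_lt with rfl | hvt
    · exact (hηγ (right_mem_Icc.2 hγ.le)).trans (hγ.target.trans hδ.source.symm)
    · exact piecewise_eq_of_notMem _ _ _ hvt.not_ge
  have hunion : Icc u w = Icc u v ∪ Icc v w := (Icc_union_Icc_eq_Icc hγ.le hδ.le).symm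
  have hcross : ∀ t ∈ Icc u v, ∀ t' ∈ Icc v w, η t = η t' → t = t' := by
    intro t ht t' ht' h
    rw [hηγ ht, hηδ ht'] at h
    obtain rfl : t = v := hmeet t ht t' ht' h
    exact hδ.injOn (left_mem_Icc.2 hδ.le) ht' (hδ.source.trans (hγ.target.symm.trans h))
  refine ⟨η, ⟨hγ.le.trans hδ.le, ?_, ?_, ?_, ?_⟩, hηγ, hηδ⟩
  · rw [hunion]
    exact (hγ.continuousOn.congr hηγ).union_of_isClosed (hδ.continuousOn.congr hηδ)
      isClosed_Icc isClosed_Icc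
  · rw [hunion]
    rintro t (ht | ht) t' (ht' | ht') h
    · exact hηγ.injOn_iff.2 hγ.injOn ht ht' h
    · exact hcross t ht t' ht' h
    · exact (hcross t' ht' t ht h.symm).symm
    · exact hηδ.injOn_iff.2 hδ.injOn ht ht' h
  · exact (hηγ (left_mem_Icc.2 hγ.le)).trans hγ.source
  · exact (hηδ (right_mem_Icc.2 hδ.le)).trans hδ.target

theorem isArcBetween [T2Space X] (h : IsArcPath γ u v a b) (hab : a ≠ b) :
    IsArcBetween (γ '' Icc u v) a b := by
  have huv : u < v := h.le.lt_of_ne fun huv ↦ hab (h.source ▸ h.target ▸ congrArg γ huv)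
  have hemb := (h.continuousOn.domRestrict.isClosedEmbedding h.injOn.injective).isEmbedding
  let e := (iccHomeoI u v huv).symm.trans
    (hemb.toHomeomorph.trans (.setCongr (range_domRestrict γ (Icc u v))))
  refine ⟨e, ?_, ?_⟩
  · exact (congrArg γ (by simp)).trans h.source
  · exact (congrArg γ (by simp)).trans h.target

end IsArcPath

namespace ArcJoinedIn

theorem symm (h : ArcJoinedIn U a b) : ArcJoinedIn U b a := by
  obtain ⟨γ, u, v, hγ, hU⟩ := h
  exact ⟨_, _, _, hγ.comp_neg, fun t ht ↦ hU ⟨le_neg.1 ht.2, neg_le.1 ht.1⟩⟩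

-- Follow the first arc up to its first meeting with the second, then switch to the second.
theorem trans [T2Space X] (hab : ArcJoinedIn U a b) (hbc : ArcJoinedIn U b c) :
    ArcJoinedIn U a c := by
  obtain ⟨γ, u, v, hγ, hγU⟩ := hab
  obtain ⟨δ, u', v', hδ, hδU⟩ := hbc
  have hclosed : IsClosed (Icc u v ∩ γ ⁻¹' (δ '' Icc u' v')) :=
    hγ.continuousOn.preimage_isClosed_of_isClosed isClosed_Icc
      (isCompact_Icc.image_of_continuousOn hδ.continuousOn).isClosed
  obtain ⟨t₀, ⟨ht₀, u₀, hu₀, hmeet⟩, hfirst⟩ :=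
    (isCompact_Icc.of_isClosed_subset hclosed inter_subset_left).exists_isLeast
      ⟨v, right_mem_Icc.2 hγ.le, u', left_mem_Icc.2 hδ.le, hδ.source.trans hγ.target.symm⟩
  have hγ' : IsArcPath γ u t₀ a (δ u₀) := by
    simpa only [hγ.source, hmeet] using hγ.restrict (left_mem_Icc.2 hγ.le) ht₀ ht₀.1
  have hδ' : IsArcPath (fun t ↦ δ (t - (t₀ - u₀))) t₀ (v' + (t₀ - u₀)) (δ u₀) c := by
    simpa only [hδ.target, add_sub_cancel] using
      (hδ.restrict hu₀ (right_mem_Icc.2 hδ.le) hu₀.2).comp_sub_const (t₀ - u₀)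
  have hmaps : MapsTo (· - (t₀ - u₀)) (Icc t₀ (v' + (t₀ - u₀))) (Icc u' v') := fun t ht ↦
    ⟨by linarith [ht.1, hu₀.1], by linarith [ht.2]⟩
  have hIcc : Icc u t₀ ⊆ Icc u v := Icc_subset_Icc_right ht₀.2
  obtain ⟨η, hη, hηγ, hηδ⟩ := hγ'.exists_append hδ' fun t ht t' ht' h ↦
    le_antisymm ht.2 (hfirst ⟨hIcc ht, _, hmaps ht', h.symm⟩)
  refine ⟨η, _, _, hη, ?_⟩
  rw [← Icc_union_Icc_eq_Icc hγ'.le hδ'.le]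
  exact ((hγU.mono_left hIcc).congr hηγ.symm).union ((hδU.comp hmaps).congr hηδ.symm)

theorem mem_connectedComponentIn (h : ArcJoinedIn U a b) : b ∈ connectedComponentIn U a := by
  obtain ⟨γ, u, v, hγ, hU⟩ := h
  exact (isPreconnected_Icc.image γ hγ.continuousOn).subset_connectedComponentIn
    ⟨u, left_mem_Icc.2 hγ.le, hγ.source⟩ hU.image_subset ⟨v, right_mem_Icc.2 hγ.le, hγ.target⟩

theorem exists_isArcBetween [T2Space X] (h : ArcJoinedIn U a b) (hab : a ≠ b) :
    ∃ A ⊆ U, IsArcBetween A a b := by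
  obtain ⟨γ, u, v, hγ, hU⟩ := h
  exact ⟨_, hU.image_subset, hγ.isArcBetween hab⟩

end ArcJoinedIn

theorem isArcPath_iccExtend (e : unitInterval ≃ₜ A) :
    IsArcPath (IccExtend zero_le_one fun t ↦ (e t : X)) 0 1 (e 0) (e 1) := by
  have hinj : Function.Injective fun t ↦ (e t : X) := Subtype.val_injective.comp e.injective
  refine ⟨zero_le_one, ?_, ?_, IccExtend_left _ _, IccExtend_right _ _⟩
  · exact (continuous_subtype_val.comp e.continuous).Icc_extend'.continuousOn
  · intro t ht t' ht' h
    rw [IccExtend_of_mem _ _ ht, IccExtend_of_mem _ _ ht'] at h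
    exact congrArg Subtype.val (hinj h)

theorem isArcPath_iccExtend_of_le (e : unitInterval ≃ₜ A) {r r' : unitInterval} (h : r ≤ r') :
    IsArcPath (IccExtend zero_le_one fun t ↦ (e t : X)) r r' (e r) (e r') := by
  simpa only [IccExtend_val] using (isArcPath_iccExtend e).restrict r.2 r'.2 h

theorem arcJoinedIn_of_forall_mem_uIcc (e : unitInterval ≃ₜ A) {r r' : unitInterval}
    (hU : ∀ t ∈ uIcc r r', (e t : X) ∈ U) : ArcJoinedIn U (e r : X) (e r') := by
  wlog h : r ≤ r' generalizing r r'
  · exact (this (uIcc_comm r r' ▸ hU) (le_of_not_ge h)).symm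
  refine ⟨_, _, _, isArcPath_iccExtend_of_le e h, fun t ht ↦ ?_⟩
  have ht01 : t ∈ Icc (0 : ℝ) 1 := Icc_subset_Icc r.2.1 r'.2.2 ht
  rw [IccExtend_of_mem _ _ ht01]
  exact hU ⟨t, ht01⟩ (Icc_subset_uIcc ht)

end Arcs

section LocallyArcConnected

variable {X : Type*} [TopologicalSpace X] {a b : X} {A C U : Set X}

theorem IsArc.isClosed [T2Space X] (hA : IsArc A) : IsClosed A := by
  obtain ⟨e⟩ := hA
  exact (isCompact_iff_compactSpace.2 e.compactSpace).isClosed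

theorem IsArc.eventually_arcJoinedIn (hA : IsArc A) (ha : a ∈ A) (hU : U ∈ 𝓝 a) :
    ∀ᶠ y in 𝓝[A] a, ArcJoinedIn U a y := by
  obtain ⟨e⟩ := hA
  let r := e.symm ⟨a, ha⟩
  have her : (e r : X) = a := by simp [r]
  have hpre : {t | (e t : X) ∈ U} ∈ 𝓝 r :=
    (continuous_subtype_val.comp e.continuous).tendsto' r a her hU
  have hseg : ∀ᶠ t in 𝓝 r, ArcJoinedIn U a (e t) :=
    ((tendsto_const_nhds.uIcc tendsto_id).eventually (eventually_smallSets_subset.2 hpre)).mono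
      fun t ht ↦ her ▸ arcJoinedIn_of_forall_mem_uIcc e ht
  refine (eventually_nhds_subtype_iff A ⟨a, ha⟩ _).1 ?_
  exact (e.symm.continuous.continuousAt.eventually hseg).mono fun y hy ↦ by simpa using hy

theorem locallyArcConnected_of_finite_arcs [T2Space X] {𝒜 : Set (Set X)} (hfin : 𝒜.Finite)
    (harc : ∀ A ∈ 𝒜, IsArc A) (hcover : ⋃₀ 𝒜 = univ) : LocallyArcConnected X := by
  intro x U hU
  have hall : ∀ A ∈ 𝒜, ∀ᶠ y in 𝓝 x, y ∈ A → ArcJoinedIn U x y := by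
    intro A hA
    by_cases hxA : x ∈ A
    · exact eventually_nhdsWithin_iff.1 ((harc A hA).eventually_arcJoinedIn hxA hU)
    · filter_upwards [(harc A hA).isClosed.isOpen_compl.mem_nhds hxA] with y hy hyA
      exact absurd hyA hy
  filter_upwards [(eventually_all_finite hfin).2 hall] with y hy
  obtain ⟨A, hA, hyA⟩ := mem_sUnion.1 (hcover ▸ mem_univ y)
  exact hy A hA hyA

namespace LocallyArcConnected

theorem locallyConnectedSpace (hX : LocallyArcConnected X) : LocallyConnectedSpace X := by
  refine locallyConnectedSpace_iff_connectedComponentIn_open.2 fun U hU x _ ↦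
    isOpen_iff_mem_nhds.2 fun y hy ↦ ?_
  rw [connectedComponentIn_eq hy]
  filter_upwards [hX y U (hU.mem_nhds (connectedComponentIn_subset U x hy))] with z hz
  exact hz.mem_connectedComponentIn

theorem arcJoinedIn [T2Space X] (hX : LocallyArcConnected X) (hU : IsOpen U)
    (hC : IsPreconnected C) (hCU : C ⊆ U) (ha : a ∈ C) (hb : b ∈ C) : ArcJoinedIn U a b :=
  hC.induction₂ (ArcJoinedIn U)
    (fun x hx ↦ (hX x U (hU.mem_nhds (hCU hx))).filter_mono nhdsWithin_le_nhds)
    (fun _ _ _ _ _ _ ↦ ArcJoinedIn.trans) (fun _ _ _ _ ↦ ArcJoinedIn.symm) ha hb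

end LocallyArcConnected

end LocallyArcConnected

section CutOrder

variable {X : Type*} [TopologicalSpace X] {s c x y z : X}

namespace CutLE

theorem refl (s x : X) : CutLE s x x := fun _ _ _ hx ↦ hx

theorem trans (hxy : CutLE s x y) (hyz : CutLE s y z) : CutLE s x z :=
  fun C hC hs hz ↦ hxy C hC hs (hyz C hC hs hz)

theorem base (s x : X) : CutLE s s x := fun _ _ hs _ ↦ hs

theorem eq_base (h : CutLE s c s) : c = s := h {s} isPreconnected_singleton rfl rfl

theorem isCut (h : CutLE s c z) (hcs : c ≠ s) (hcz : c ≠ z) : IsCut c :=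
  fun hpre ↦ h _ hpre hcs.symm hcz.symm rfl

theorem left_or_right (h : CutLE x c y) (s : X) : CutLE s c x ∨ CutLE s c y := by
  by_contra! hnot
  simp only [CutLE, not_forall] at hnot
  obtain ⟨⟨C, hC, hsC, hxC, hcC⟩, D, hD, hsD, hyD, hcD⟩ := hnot
  exact (h (C ∪ D) (hC.union s hsC hsD hD) (.inl hxC) (.inr hyD)).elim hcC hcD

end CutLE

theorem setOf_not_cutLE (s c : X) : {z | ¬ CutLE s c z} = connectedComponentIn {c}ᶜ s := by
  ext z
  refine ⟨fun hz ↦ ?_, fun hz hle ↦ ?_⟩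
  · simp only [CutLE, mem_ofPred_eq, not_forall] at hz
    obtain ⟨C, hC, hs, hz, hc⟩ := hz
    exact hC.subset_connectedComponentIn hs (subset_compl_singleton_iff.2 hc) hz
  · have hs : s ∈ connectedComponentIn {c}ᶜ s :=
      mem_connectedComponentIn (connectedComponentIn_nonempty_iff.1 ⟨z, hz⟩)
    exact connectedComponentIn_subset _ _ (hle _ isPreconnected_connectedComponentIn hs hz) rfl

variable [T1Space X] [LocallyConnectedSpace X]

theorem isOpen_setOf_not_cutLE (s c : X) : IsOpen {z | ¬ CutLE s c z} :=
  setOf_not_cutLE s c ▸ isOpen_compl_singleton.connectedComponentIn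

theorem isOpen_setOf_cutLE_and_ne (s c : X) : IsOpen {z | CutLE s c z ∧ c ≠ z} := by
  refine isOpen_iff_mem_nhds.2 fun z ⟨hle, hne⟩ ↦ ?_
  filter_upwards [connectedComponentIn_mem_nhds (isOpen_compl_singleton.mem_nhds hne.symm)]
    with y hy
  have hyc : y ∈ ({c}ᶜ : Set X) := connectedComponentIn_subset _ _ hy
  refine ⟨fun C hC hs hyC ↦ ?_, Ne.symm hyc⟩
  have hz : z ∈ connectedComponentIn {c}ᶜ z := mem_connectedComponentIn hne.symm
  have hunion := hC.union y hyC hy isPreconnected_connectedComponentIn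
  exact (hle _ hunion (.inl hs) (.inr hz)).resolve_right
    fun hc ↦ connectedComponentIn_subset _ _ hc rfl

-- The infimum of the parameters `t` at which `g t` is above `γ t` works.
theorem CutMonotone.exists_mem_Icc_eq {α : Type*} [ConditionallyCompleteLinearOrder α]
    [TopologicalSpace α] [OrderTopology α] [DenselyOrdered α] {γ g : α → X} {a b : α}
    (hγ : CutMonotone s γ) (hg : Continuous g) (hab : a ≤ b) (ha : ¬ CutLE s (γ a) (g a))
    (hb : CutLE s (γ b) (g b)) : ∃ t ∈ Icc a b, γ t = g t := by
  let Y := {t ∈ Icc a b | CutLE s (γ t) (g t)}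
  have hbY : b ∈ Y := ⟨right_mem_Icc.2 hab, hb⟩
  obtain ⟨τ, hτ⟩ : ∃ τ, IsGLB Y τ := ⟨_, isGLB_csInf ⟨b, hbY⟩ ⟨a, fun t ht ↦ ht.1.1⟩⟩
  have hτI : τ ∈ Icc a b := ⟨hτ.2 fun t ht ↦ ht.1.1, hτ.1 hbY⟩
  have hτY : CutLE s (γ τ) (g τ) := by
    by_contra hnot
    have hnear : ∀ᶠ t in 𝓝[≥] τ, ¬ CutLE s (γ τ) (g t) :=
      nhdsWithin_le_nhds (hg.continuousAt.eventually_mem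
        ((isOpen_setOf_not_cutLE s (γ τ)).mem_nhds hnot))
    obtain ⟨t, ht, hτt, hnt⟩ := ((hτ.frequently_mem ⟨b, hbY⟩).and_eventually
      (eventually_mem_nhdsWithin.and hnear)).exists
    exact hnt ((hγ hτt).trans ht.2)
  refine ⟨τ, hτI, by_contra fun hne ↦ ?_⟩
  have haτ : a < τ := hτI.1.lt_of_ne fun h ↦ ha (h ▸ hτY)
  have hnear : ∀ᶠ t in 𝓝[<] τ, CutLE s (γ τ) (g t) ∧ γ τ ≠ g t :=
    nhdsWithin_le_nhds (hg.continuousAt.eventually_mem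
      ((isOpen_setOf_cutLE_and_ne s (γ τ)).mem_nhds ⟨hτY, hne⟩))
  have := nhdsLT_neBot_of_exists_lt ⟨a, haτ⟩
  obtain ⟨t, ⟨hle, -⟩, hat, htτ⟩ := (hnear.and (Ioo_mem_nhdsLT haτ)).exists
  exact (hτ.1 ⟨⟨hat.le, htτ.le.trans hτI.2⟩, (hγ htτ.le).trans hle⟩).not_gt htτ

end CutOrder

section ArcMonotone

variable {X : Type*} [TopologicalSpace X] [T2Space X] {A : Set X}

-- A connected set joining `e 0` to `e r'` off `e r` would contain a second arc between them.
theorem UniquelyArcConnected.cutMonotone (huniq : UniquelyArcConnected X)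
    (hloc : LocallyArcConnected X) (e : unitInterval ≃ₜ A) :
    CutMonotone (e 0 : X) fun t ↦ (e t : X) := by
  intro r r' hrr' C hC h0 hr'
  by_contra hr
  have hne : (e 0 : X) ≠ e r' := by
    intro h
    have hr'0 : 0 = r' := e.injective (Subtype.ext h)
    obtain rfl : r = 0 := le_antisymm (hr'0 ▸ hrr') r.2.1
    exact hr h0
  obtain ⟨B, hB, hBarc⟩ := (hloc.arcJoinedIn isOpen_compl_singleton hC
    (subset_compl_singleton_iff.2 hr) h0 hr').exists_isArcBetween hne
  have hsub := (isArcPath_iccExtend_of_le e r'.2.1).isArcBetween hne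
  obtain rfl := (huniq _ _ hne).unique hBarc hsub
  exact hB ⟨r, ⟨r.2.1, hrr'⟩, IccExtend_val _ _ r⟩ rfl

theorem UniquelyArcConnected.exists_cutMonotone_path (huniq : UniquelyArcConnected X)
    (hloc : LocallyArcConnected X) (s x : X) : ∃ γ : Path s x, CutMonotone s γ := by
  rcases eq_or_ne s x with rfl | hne
  · exact ⟨.refl s, fun _ _ _ ↦ CutLE.refl s s⟩
  · obtain ⟨A, e, h0, h1⟩ := (huniq s x hne).exists
    have hmono := huniq.cutMonotone hloc e
    exact ⟨⟨⟨fun t ↦ e t, by fun_prop⟩, h0, h1⟩, h0 ▸ hmono⟩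

theorem UniquelyArcConnected.exists_finite_forall_cutLE (huniq : UniquelyArcConnected X)
    (hloc : LocallyArcConnected X) {𝒜 : Set (Set X)} (hfin : 𝒜.Finite)
    (harc : ∀ A ∈ 𝒜, IsArc A) (hcover : ⋃₀ 𝒜 = univ) (s : X) :
    ∃ P : Set X, P.Finite ∧ ∀ z, ∃ p ∈ P, CutLE s z p := by
  have hends : ∀ A ∈ 𝒜, ∃ a b, ∀ z ∈ A, CutLE s z a ∨ CutLE s z b := by
    intro A hA
    obtain ⟨e⟩ := harc A hA
    refine ⟨e 0, e 1, fun z hz ↦ CutLE.left_or_right ?_ s⟩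
    simpa using huniq.cutMonotone hloc e (unitInterval.le_one' (t := e.symm ⟨z, hz⟩))
  have : Nonempty X := ⟨s⟩
  choose! a b hab using hends
  refine ⟨a '' 𝒜 ∪ b '' 𝒜, (hfin.image a).union (hfin.image b), fun z ↦ ?_⟩
  obtain ⟨A, hA, hzA⟩ := mem_sUnion.1 (hcover ▸ mem_univ z)
  rcases hab A hA z hzA with h | h
  · exact ⟨a A, .inl (mem_image_of_mem a hA), h⟩
  · exact ⟨b A, .inr (mem_image_of_mem b hA), h⟩

end ArcMonotone

theorem tendsto_sInf_image_of_antitoneOn {ι α : Type*} [Preorder ι] [CompleteLinearOrder α]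
    [TopologicalSpace α] [OrderTopology α] {t : ι → α} {I : Set ι} (ht : AntitoneOn t I) :
    Tendsto t (atTop ⊓ 𝓟 I) (𝓝 (sInf (t '' I))) := by
  refine tendsto_order.2 ⟨fun a ha ↦ ?_, fun a ha ↦ ?_⟩
  · exact eventually_inf_principal.2 (.of_forall fun n hn ↦
      ha.trans_le (sInf_le (mem_image_of_mem t hn)))
  · obtain ⟨_, ⟨m, hm, rfl⟩, hma⟩ := sInf_lt_iff.1 ha
    refine eventually_inf_principal.2 ?_
    filter_upwards [eventually_ge_atTop m] with n hmn hn
    exact (ht hm hn hmn).trans_lt hma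

theorem mem_image_of_mapClusterPt_of_tendsto_inf_principal {ι κ X : Type*} [TopologicalSpace X]
    [T2Space X] {l : Filter ι} {w : ι → X} {P : Set κ} (hP : P.Finite) {I : κ → Set ι} {q : κ → X}
    (hI : ∀ᶠ n in l, ∃ p ∈ P, n ∈ I p)
    (hq : ∀ p ∈ P, Tendsto w (l ⊓ 𝓟 (I p)) (𝓝 (q p))) {y : X} (hy : MapClusterPt y l w) :
    y ∈ q '' P := by
  obtain ⟨𝒰, h𝒰, hwy⟩ := mapClusterPt_iff_ultrafilter.1 hy
  obtain ⟨p, hp, hIp⟩ := (Ultrafilter.eventually_exists_mem_iff hP).1 (h𝒰 hI)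
  have hwq : Tendsto w 𝒰 (𝓝 (q p)) := (hq p hp).mono_left (le_inf h𝒰 (le_principal_iff.2 hIp))
  exact ⟨p, hp, tendsto_nhds_unique hwq hwy⟩

section OmegaLimit

variable {X : Type*} [TopologicalSpace X] {s p : X} {w : ℕ → X}

-- The parameters on `γ` of the terms below `p` decrease, so they converge to their infimum.
theorem CutMonotone.exists_tendsto {γ : Path s p} (hγ : CutMonotone s γ)
    (hw : ∀ m n, m < n → ¬ CutLE s (w m) (w n)) :
    ∃ q, (q = s ∨ IsCut q) ∧ Tendsto w (atTop ⊓ 𝓟 {n | CutLE s (w n) p}) (𝓝 q) := by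
  set I := {n | CutLE s (w n) p}
  rcases I.finite_or_infinite with hI | hI
  · have hbot : atTop ⊓ 𝓟 I = ⊥ :=
      inf_principal_eq_bot.2 (Nat.cofinite_eq_atTop ▸ hI.compl_mem_cofinite)
    exact ⟨s, .inl rfl, hbot ▸ tendsto_bot⟩
  have hparam : ∀ n ∈ I, ∃ t, γ t = w n := fun n hn ↦
    hn _ (isPreconnected_range γ.continuous) ⟨0, γ.source⟩ ⟨1, γ.target⟩
  choose! t ht using hparam
  have hanti : AntitoneOn t I := by
    intro m hm n hn hmn
    rcases hmn.eq_or_lt with rfl | hmn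
    · exact le_rfl
    · exact le_of_not_ge fun h ↦ hw m n hmn (ht m hm ▸ ht n hn ▸ hγ h)
  let τ := sInf (t '' I)
  have hbelow : ∀ n ∈ I, CutLE s (γ τ) (w n) := fun n hn ↦
    ht n hn ▸ hγ (sInf_le (mem_image_of_mem t hn))
  obtain ⟨m, hm⟩ := hI.nonempty
  obtain ⟨n, hn, hmn⟩ := hI.exists_gt m
  refine ⟨γ τ, or_iff_not_imp_left.2 fun hs ↦ (hbelow m hm).isCut hs fun h ↦ ?_, ?_⟩
  · exact hw m n hmn (h ▸ hbelow n hn)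
  · refine ((γ.continuous.tendsto τ).comp (tendsto_sInf_image_of_antitoneOn hanti)).congr' ?_
    exact eventually_inf_principal.2 (.of_forall ht)

theorem exists_finite_mapClusterPt_of_not_cutLE [T2Space X] {P : Set X} (hP : P.Finite)
    (hPle : ∀ z, ∃ p ∈ P, CutLE s z p) (hpath : ∀ p ∈ P, ∃ γ : Path s p, CutMonotone s γ)
    (hw : ∀ m n, m < n → ¬ CutLE s (w m) (w n)) :
    ∃ Q : Set X, Q.Finite ∧ (∀ q ∈ Q, q = s ∨ IsCut q) ∧ ∀ y, MapClusterPt y atTop w → y ∈ Q := by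
  have hlim : ∀ p ∈ P, ∃ q, (q = s ∨ IsCut q) ∧
      Tendsto w (atTop ⊓ 𝓟 {n | CutLE s (w n) p}) (𝓝 q) := fun p hp ↦
    (hpath p hp).elim fun _ hγ ↦ hγ.exists_tendsto hw
  have : Nonempty X := ⟨s⟩
  choose! q hq hlim using hlim
  exact ⟨q '' P, hP.image q, forall_mem_image.2 hq, fun y hy ↦
    mem_image_of_mapClusterPt_of_tendsto_inf_principal hP (.of_forall fun n ↦ hPle (w n)) hlim hy⟩

end OmegaLimit

section Dynamics

theorem exists_mem_periodicPts_of_finite_of_mapsTo {α : Type*} {f : α → α} {S : Set α}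
    (hfin : S.Finite) (hne : S.Nonempty) (hS : MapsTo f S S) :
    ∃ y ∈ S, y ∈ Function.periodicPts f := by
  obtain ⟨y, hy⟩ := hne
  obtain ⟨m, -, n, -, hmn, heq⟩ :=
    infinite_univ.exists_lt_map_eq_of_mapsTo (fun n _ ↦ hS.iterate n hy) hfin
  refine ⟨f^[m] y, hS.iterate m hy, n - m, Nat.sub_pos_of_lt hmn, ?_⟩
  rw [Function.IsPeriodicPt, Function.IsFixedPt, ← Function.iterate_add_apply,
    Nat.sub_add_cancel hmn.le, heq]

variable {X : Type*} [TopologicalSpace X] {f : X → X} {s x : X}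

theorem mapsTo_mapClusterPt_iterate (hf : Continuous f) (x : X) :
    MapsTo f {y | MapClusterPt y atTop fun n ↦ f^[n] x}
      {y | MapClusterPt y atTop fun n ↦ f^[n] x} := by
  intro y hy
  have hfy : MapClusterPt (f y) atTop ((fun n ↦ f^[n] x) ∘ (· + 1)) := by
    simpa only [Function.comp_def, Function.iterate_succ_apply'] using
      MapClusterPt.continuousAt_comp hf.continuousAt hy
  exact hfy.of_comp (tendsto_add_atTop_nat 1)

theorem exists_mapClusterPt_iterate_mem_periodicPts [CompactSpace X] (hf : Continuous f)
    (hfin : {y | MapClusterPt y atTop fun n ↦ f^[n] x}.Finite) :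
    ∃ y, MapClusterPt y atTop (fun n ↦ f^[n] x) ∧ y ∈ Function.periodicPts f :=
  exists_mem_periodicPts_of_finite_of_mapsTo hfin
    (exists_clusterPt_of_compactSpace (map (fun n ↦ f^[n] x) atTop))
    (mapsTo_mapClusterPt_iterate hf x)

namespace IsAFP

theorem exists_mapsTo_subset (hs : IsAFP f s) {U : Set X} (hU : U ∈ 𝓝 s) :
    ∃ V ⊆ U, IsOpen V ∧ s ∈ V ∧ MapsTo f (closure V) V := by
  obtain ⟨W, hWU, hW, hsW⟩ := mem_nhds_iff.1 hU
  obtain ⟨V, hV, hsV, hVW, hfV⟩ := hs.2 W hW hsW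
  exact ⟨V, hVW.trans hWU, hV, hsV, mapsTo_iff_image_subset.2 hfV⟩

theorem iterate (hs : IsAFP f s) {n : ℕ} (hn : n ≠ 0) : IsAFP f^[n] s := by
  refine ⟨Function.iterate_fixed hs.1 n, fun U hU hsU ↦ ?_⟩
  obtain ⟨V, hVU, hV, hsV, hfV⟩ := hs.exists_mapsTo_subset (hU.mem_nhds hsU)
  refine ⟨V, hV, hsV, hVU, mapsTo_iff_image_subset.1 ?_⟩
  obtain ⟨m, rfl⟩ := Nat.exists_eq_succ_of_ne_zero hn
  exact ((hfV.mono_left subset_closure).iterate m).comp hfV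

theorem tendsto_iterate_of_mapClusterPt (hs : IsAFP f s)
    (hx : MapClusterPt s atTop fun n ↦ f^[n] x) : Tendsto (fun n ↦ f^[n] x) atTop (𝓝 s) := by
  refine fun U hU ↦ mem_map.2 ?_
  obtain ⟨V, hVU, hV, hsV, hfV⟩ := hs.exists_mapsTo_subset hU
  obtain ⟨n, hn⟩ := (hx.frequently (hV.mem_nhds hsV)).exists
  filter_upwards [eventually_ge_atTop n] with m hm
  obtain ⟨k, rfl⟩ := Nat.exists_eq_add_of_le' hm
  rw [mem_preimage, Function.iterate_add_apply]
  exact hVU ((hfV.mono_left subset_closure).iterate k hn)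

variable [T1Space X]

-- Where the path first leaves a trapping neighbourhood `V` of `s`, the initial piece of the path is
-- mapped into `V`.
theorem exists_not_cutLE (hs : IsAFP f s) (hf : Continuous f) (hxs : x ≠ s) (γ : Path s x) :
    ∃ t, ¬ CutLE s (γ t) (f (γ t)) := by
  obtain ⟨V, hVx, hV, hsV, hfV⟩ :=
    hs.exists_mapsTo_subset (isOpen_compl_singleton.mem_nhds hxs.symm)
  have hout : IsCompact {t | γ t ∉ V} := (hV.isClosed_compl.preimage γ.continuous).isCompact
  obtain ⟨b, hbV, hmin⟩ := hout.exists_isLeast ⟨1, fun h ↦ hVx h γ.target⟩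
  have hb : 0 < b := unitInterval.pos_iff_ne_zero.2 fun h ↦ hbV (by rwa [h, γ.source])
  have hinit : γ '' Iic b ⊆ closure V := by
    rw [← closure_Iio' (a := b) ⟨0, hb⟩]
    refine (image_closure_subset_closure_image γ.continuous).trans (closure_mono ?_)
    exact image_subset_iff.2 fun t ht ↦ by_contra fun h ↦ (hmin h).not_gt ht
  have hsub : f '' (γ '' Iic b) ⊆ V := (hfV.mono_left hinit).image_subset
  refine ⟨b, fun hle ↦ hbV (hsub (hle _ ?_ ?_ ?_))⟩
  · exact (isPreconnected_Iic.image γ γ.continuous.continuousOn).image f hf.continuousOn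
  · exact ⟨s, ⟨0, hb.le, γ.source⟩, hs.1⟩
  · exact mem_image_of_mem f (mem_image_of_mem γ self_mem_Iic)

theorem isFixedPt_of_cutLE [LocallyConnectedSpace X] (hs : IsAFP f s) (hf : Continuous f)
    (hcut : ∀ c, IsCut c → f c ≠ c) {γ : Path s x} (hγ : CutMonotone s γ)
    (hle : CutLE s x (f x)) : Function.IsFixedPt f x := by
  rcases eq_or_ne x s with rfl | hxs
  · exact hs.1
  obtain ⟨b, hb⟩ := hs.exists_not_cutLE hf hxs γ
  obtain ⟨τ, hτ, hfix⟩ := hγ.exists_mem_Icc_eq (hf.comp γ.continuous) unitInterval.le_one' hb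
    (by simpa using hle)
  have hτs : γ τ ≠ s := by
    intro h
    have hbs : CutLE s (γ b) (γ τ) := hγ hτ.1
    rw [h] at hbs
    rw [hbs.eq_base] at hb
    exact hb (CutLE.base s _)
  have hτx : CutLE s (γ τ) x := by simpa using hγ (unitInterval.le_one' (t := τ))
  by_contra hx
  refine hcut (γ τ) (hτx.isCut hτs fun h ↦ hx ?_) hfix.symm
  exact h ▸ hfix.symm

theorem not_cutLE_iterate [LocallyConnectedSpace X] (hs : IsAFP f s) (hf : Continuous f)
    (hpath : ∀ z, ∃ γ : Path s z, CutMonotone s γ)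
    (hcut : ∀ c, IsCut c → c ∉ Function.periodicPts f)
    (hx : ∀ n, f^[n] x ∉ Function.periodicPts f) {m n : ℕ} (hmn : m < n) :
    ¬ CutLE s (f^[m] x) (f^[n] x) := by
  intro hle
  obtain ⟨k, rfl⟩ := Nat.exists_eq_add_of_le' hmn.le
  have hk : 0 < k := by lia
  rw [Function.iterate_add_apply] at hle
  obtain ⟨γ, hγ⟩ := hpath (f^[m] x)
  exact hx m ⟨k, hk, (hs.iterate hk.ne').isFixedPt_of_cutLE (hf.iterate k)
    (fun c hc hfc ↦ hcut c hc ⟨k, hk, hfc⟩) hγ hle⟩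

end IsAFP

end Dynamics

/-- with no periodic cut-points, every orbit either eventually
hits a periodic point or converges to the attracting fixed point `s`. -/
theorem orbit_periodic_or_tendsto_afp {T : Type*} [MetricSpace T]
    (hT : IsTreeSpace T) (f : T → T) (hf : Continuous f)
    (hcut : ∀ x : T, IsCut x → ∀ p : ℕ, 1 ≤ p → f^[p] x ≠ x)
    (s : T) (hs : IsAFP f s) :
    ∀ x : T, (∃ n p : ℕ, 1 ≤ p ∧ f^[p] (f^[n] x) = f^[n] x) ∨
      Tendsto (fun n : ℕ => f^[n] x) atTop (𝓝 s) := by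
  intro x
  rcases hT.finiteArcs with ⟨x₀, hx₀⟩ | ⟨𝒜, harc, hcover⟩
  · have : Subsingleton T := subsingleton_univ_iff.1 (hx₀ ▸ subsingleton_singleton)
    exact .inl ⟨0, 1, le_rfl, Subsingleton.elim _ _⟩
  have hloc := locallyArcConnected_of_finite_arcs 𝒜.finite_toSet harc hcover
  have huniq : UniquelyArcConnected T := hT.uniqueArc
  have := hloc.locallyConnectedSpace
  have := hT.compact
  have hcut' : ∀ c, IsCut c → c ∉ Function.periodicPts f := fun c hc ⟨k, hk, hfc⟩ ↦
    hcut c hc k hk hfc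
  have hpath := huniq.exists_cutMonotone_path hloc s
  refine or_iff_not_imp_left.2 fun hper ↦ hs.tendsto_iterate_of_mapClusterPt ?_
  obtain ⟨P, hP, hPle⟩ :=
    huniq.exists_finite_forall_cutLE hloc 𝒜.finite_toSet harc hcover s
  obtain ⟨Q, hQ, hQcut, hclusterQ⟩ := exists_finite_mapClusterPt_of_not_cutLE hP hPle
    (fun p _ ↦ hpath p) fun _ _ ↦ hs.not_cutLE_iterate hf hpath hcut' fun n hn ↦ hper ⟨n, hn⟩
  obtain ⟨y, hy, hyper⟩ := exists_mapClusterPt_iterate_mem_periodicPts hf (hQ.subset hclusterQ)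
  obtain rfl | hycut := hQcut y (hclusterQ y hy)
  · exact hy
  · exact absurd hyper (hcut' y hycut)
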